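/- Let Ω be a symmetric oval. Then π_Ω(R) ∼ area(Ω)·R²/(log R)² as R → ∞; that is, π_Ω(R)·(log R)²/(area(Ω)·R²) → 1 as R → ∞. -/

import Mathlib

/-! Together with Riemann sums, the prime number theorem `π(x) log x / x → 1` gives the result.

*From the prime number theorem to the oval.* By symmetry, `π_Ω(R)` is four times the number of
prime pairs in the first quadrant of `RΩ`, that is, `4 ∑ π(R f(p/R))` over the primes `p ≤ aR`
(`SymmetricOval.primeCount_eq`). Divide `[0, a]` into `N` equal parts. Since `f` is decreasing, the
sum lies between `4 ∑ (π(xᵢ₊₁R) - π(xᵢR)) π(R f(xᵢ₊₁))` and the same expression with `f(xᵢ)`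
(`SymmetricOval.primeCount_mem_Icc`). As `π(αR) log R / R → α` for every fixed `α ≥ 0`, these
bounds, multiplied by `(log R / R)²`, tend to the lower and upper Riemann sums of
`4 ∫₀^a f = area(Ω)`, which differ by `4ab/N` (`SymmetricOval.riemannSum_sub`).

*The prime number theorem.* The proof is the Wiener-Ikehara argument. Put
`φ(u) = ψ(eᵘ)e⁻ᵘ - 1` for `u > 0` and `φ(u) = 0` otherwise; Chebyshev's bound makes `φ` bounded.
Its Laplace transform at `z` is `(-ζ'/ζ(1+z) - 1/z - 1) / (1+z)`
(`integral_chebErr_mul_exp`), which extends continuously to `Re z ≥ 0` because `ζ` does not vanish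
on the line `Re s = 1`; that continuity is in Mathlib, stated for Dirichlet L-functions. The
means `∫ φ(u) K(l(x-u)) du` against the Fejér kernel `K` are then Fourier integrals over a
bounded segment of the imaginary axis, hence tend to `0` as `x → ∞` by the Riemann-Lebesgue lemma
(`tendsto_integral_mul_fejer`). Finally, `eᵘ(φ(u)+1) = ψ(eᵘ)` is increasing, so that `φ` cannot be
far from `0` at one point without being so on a whole window, where a concentrated Fejér mean
would detect it (`tendsto_zero_of_fejer`). Thus `ψ(x) ∼ x`, and passing from `ψ` to `θ` to `π` is
routine. -/


noncomputable section

open MeasureTheory Filter Set Pointwise Classical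

/-- A symmetric oval: a compact convex planar domain, symmetric under reflections in the
coordinate axes, with smooth boundary of nowhere vanishing curvature. It is described by the
function `f` whose graph over `[-a,a]` is the top half of the boundary, together with the
inverse function `g` describing the right half of the boundary. -/
structure SymmetricOval where
  a : ℝ
  b : ℝ
  f : ℝ → ℝ
  g : ℝ → ℝ
  a_pos : 0 < a
  b_pos : 0 < b
  f_even : ∀ x, f (-x) = f x
  g_even : ∀ y, g (-y) = g y
  f_zero : f 0 = b
  f_a : f a = 0
  f_cont : ContinuousOn f (Set.Icc (-a) a)
  g_cont : ContinuousOn g (Set.Icc (-b) b)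
  f_smooth : ContDiffOn ℝ (⊤ : ℕ∞) f (Set.Ioo (-a) a)
  g_smooth : ContDiffOn ℝ (⊤ : ℕ∞) g (Set.Ioo (-b) b)
  f_anti : StrictAntiOn f (Set.Icc 0 a)
  f_conc : ∀ x ∈ Set.Ioo (-a) a, deriv (deriv f) x < 0
  g_conc : ∀ y ∈ Set.Ioo (-b) b, deriv (deriv g) y < 0
  g_inv_f : ∀ x ∈ Set.Icc 0 a, g (f x) = x
  f_inv_g : ∀ y ∈ Set.Icc 0 b, f (g y) = y

namespace SymmetricOval

variable (O : SymmetricOval)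

/-- The region `Ω ⊂ ℝ²` bounded by the oval. -/
def region : Set (ℝ × ℝ) := {p | |p.1| ≤ O.a ∧ |p.2| ≤ O.f |p.1|}

/-- The area of the oval. -/
def area : ℝ := (volume O.region).toReal

/-- `ψ_Ω(R) = Σ_{(m,n) ∈ ℤ² ∩ RΩ} Λ(|m|)Λ(|n|)`. -/
def psi (R : ℝ) : ℝ :=
  ∑' p : ℤ × ℤ,
    if ((p.1 : ℝ), (p.2 : ℝ)) ∈ R • O.region then
      ArithmeticFunction.vonMangoldt p.1.natAbs * ArithmeticFunction.vonMangoldt p.2.natAbs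
    else 0

/-- `π_Ω(R)`: the number of lattice points in `RΩ` both of whose coordinates are
(up to sign) prime. -/
def primeCount (R : ℝ) : ℕ :=
  Nat.card {p : ℤ × ℤ // ((p.1 : ℝ), (p.2 : ℝ)) ∈ R • O.region ∧
    p.1.natAbs.Prime ∧ p.2.natAbs.Prime}

/-- The Mellin transform `I₁(ρ) = ∫₀^a f(x) x^{ρ-1} dx`. -/
def I1 (ρ : ℂ) : ℂ := ∫ x in (0:ℝ)..O.a, (O.f x : ℂ) * (x : ℂ) ^ (ρ - 1)

/-- The Mellin transform `I₂(ρ) = ∫₀^b g(y) y^{ρ-1} dy`. -/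
def I2 (ρ : ℂ) : ℂ := ∫ y in (0:ℝ)..O.b, (O.g y : ℂ) * (y : ℂ) ^ (ρ - 1)

end SymmetricOval

/-- The set of nontrivial zeros of the Riemann zeta function. -/
def zetaZeros : Set ℂ := {ρ | riemannZeta ρ = 0 ∧ 0 < ρ.re ∧ ρ.re < 1}

namespace SymmetricOval

variable (O : SymmetricOval)

/-- `H̃_Ω(R) = -4 Σ_ρ R^{ρ-1/2} (I₁(ρ)+I₂(ρ))`, as a complex number. -/
def HtildeC (R : ℝ) : ℂ :=
  -4 * ∑' ρ : zetaZeros, (R : ℂ) ^ ((ρ : ℂ) - 1/2) * (O.I1 ρ + O.I2 ρ)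

/-- `H̃_Ω(R)`, which is real (under RH the sum is invariant under conjugation). -/
def Htilde (R : ℝ) : ℝ := (O.HtildeC R).re

end SymmetricOval

/-! ### The Fejér kernel -/

/-- The Fejér kernel (up to normalization), `(sin (y/2) / (y/2))²`. -/
def fejer (y : ℝ) : ℝ := Real.sinc (y / 2) ^ 2

lemma fejer_nonneg (y : ℝ) : 0 ≤ fejer y := sq_nonneg _

lemma continuous_fejer : Continuous fejer := by
  unfold fejer
  exact (Real.continuous_sinc.comp (by fun_prop)).pow 2

lemma fejer_le (y : ℝ) : fejer y ≤ 5 * (1 + y ^ 2)⁻¹ := by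
  have h1 : fejer y ≤ 1 := by
    unfold fejer
    rw [sq_le_one_iff_abs_le_one]
    exact Real.abs_sinc_le_one _
  have h2 : y ^ 2 * fejer y ≤ 4 := by
    unfold fejer
    rcases eq_or_ne y 0 with rfl | hy
    · simp
    · rw [Real.sinc_of_ne_zero (by positivity), div_pow]
      have := Real.sin_sq_le_one (y / 2)
      have e : y ^ 2 * (Real.sin (y / 2) ^ 2 / (y / 2) ^ 2) = 4 * Real.sin (y / 2) ^ 2 := by
        field_simp; ring
      rw [e]; linarith
  rw [← div_eq_mul_inv, le_div_iff₀ (by positivity)]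
  nlinarith

lemma integrable_fejer : Integrable fejer :=
  (integrable_inv_one_add_sq.const_mul 5).mono' continuous_fejer.aestronglyMeasurable
    (ae_of_all _ fun y => by
      rw [Real.norm_of_nonneg (fejer_nonneg y)]; exact fejer_le y)

lemma integral_fejer_pos : 0 < ∫ y, fejer y := by
  rw [integral_pos_iff_support_of_nonneg fejer_nonneg integrable_fejer]
  refine continuous_fejer.isOpen_support.measure_pos _ ⟨0, ?_⟩
  simp [fejer]

lemma integral_one_sub_mul_exp {c : ℂ} (hc : c ≠ 0) :
    ∫ t in (0:ℝ)..1, ((1 - t : ℝ) : ℂ) * Complex.exp (c * t) =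
      (Complex.exp c - 1 - c) / c ^ 2 := by
  have hd : ∀ t ∈ uIcc (0:ℝ) 1, HasDerivAt
      (fun t : ℝ => (1 - (t : ℂ)) * Complex.exp (c * t) / c + Complex.exp (c * t) / c ^ 2)
      (((1 - t : ℝ) : ℂ) * Complex.exp (c * t)) t := by
    intro t _
    have h0 : HasDerivAt (fun t : ℝ => (t : ℂ)) 1 t := Complex.ofRealCLM.hasDerivAt
    have h1 : HasDerivAt (fun t : ℝ => Complex.exp (c * t)) (Complex.exp (c * t) * (c * 1)) t :=
      (h0.const_mul c).cexp
    have h2 := (((h0.const_sub 1).mul h1).div_const c).add (h1.div_const (c ^ 2))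
    refine HasDerivAt.congr_deriv h2 ?_
    push_cast
    field_simp
    ring
  rw [intervalIntegral.integral_eq_sub_of_hasDerivAt hd
    (Continuous.intervalIntegrable (by fun_prop) _ _)]
  simp
  field_simp
  ring

/-- The Fejér kernel is the Fourier transform of the tent function on `[-1, 1]`. -/
lemma fejer_eq_integral (y : ℝ) :
    ∫ t in (-1:ℝ)..1, ((1 - |t| : ℝ) : ℂ) * Complex.exp (Complex.I * y * t) = (fejer y : ℂ) := by
  have hcont : Continuous fun t : ℝ =>
    ((1 - |t| : ℝ) : ℂ) * Complex.exp (Complex.I * y * t) := by fun_prop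
  rw [← intervalIntegral.integral_add_adjacent_intervals (b := 0)
    (hcont.intervalIntegrable _ _) (hcont.intervalIntegrable _ _)]
  have e1 : ∫ t in (-1:ℝ)..0, ((1 - |t| : ℝ) : ℂ) * Complex.exp (Complex.I * y * t) =
      ∫ t in (0:ℝ)..1, ((1 - t : ℝ) : ℂ) * Complex.exp (-(Complex.I * y) * t) := by
    have := intervalIntegral.integral_comp_neg (a := 0) (b := 1) (fun t : ℝ =>
      ((1 - |t| : ℝ) : ℂ) * Complex.exp (Complex.I * y * t))
    rw [neg_zero] at this
    rw [← this]
    refine intervalIntegral.integral_congr fun t ht => ?_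
    rw [uIcc_of_le zero_le_one] at ht
    simp [abs_of_nonneg ht.1]
  have e2 : ∫ t in (0:ℝ)..1, ((1 - |t| : ℝ) : ℂ) * Complex.exp (Complex.I * y * t) =
      ∫ t in (0:ℝ)..1, ((1 - t : ℝ) : ℂ) * Complex.exp (Complex.I * y * t) := by
    refine intervalIntegral.integral_congr fun t ht => ?_
    rw [uIcc_of_le zero_le_one] at ht
    simp [abs_of_nonneg ht.1]
  rw [e1, e2]
  rcases eq_or_ne y 0 with rfl | hy
  · have : ∫ t in (0:ℝ)..1, ((1 - t : ℝ) : ℂ) = 1 / 2 := by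
      rw [intervalIntegral.integral_ofReal, intervalIntegral.integral_sub (by simp) (by simp)]
      norm_num
    simp only [Complex.ofReal_zero, mul_zero, neg_zero, zero_mul, Complex.exp_zero, mul_one]
    rw [this]
    simp [fejer]
    norm_num
  · have hc : Complex.I * y ≠ 0 := mul_ne_zero Complex.I_ne_zero (by exact_mod_cast hy)
    rw [integral_one_sub_mul_exp hc, integral_one_sub_mul_exp (neg_ne_zero.mpr hc)]
    have hcos : Complex.exp (Complex.I * y) + Complex.exp (-(Complex.I * y)) =
        2 * (Real.cos y : ℂ) := by
      rw [Complex.ofReal_cos, Complex.cos]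
      ring_nf
    have hf : fejer y = 2 * (1 - Real.cos y) / y ^ 2 := by
      unfold fejer
      rw [Real.sinc_of_ne_zero (by positivity), div_pow, Real.sin_sq, Real.cos_sq]
      field_simp
      ring
    have hy' : (y : ℂ) ≠ 0 := by exact_mod_cast hy
    rw [hf]
    push_cast
    rw [neg_sq, ← add_div, mul_pow, Complex.I_sq]
    rw [div_eq_div_iff (by simpa using hy') (by simpa using hy')]
    have : Complex.exp (-(Complex.I * y)) = 2 * (Real.cos y : ℂ) - Complex.exp (Complex.I * y) := by
      rw [← hcos]; ring
    rw [this]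
    push_cast
    ring

/-! ### Fejér means and the Laplace transform -/

lemma integrable_mul_exp_neg {φ : ℝ → ℝ} {M : ℝ} (hm : Measurable φ) (hM : ∀ u, |φ u| ≤ M)
    (h0 : ∀ u ≤ 0, φ u = 0) {δ : ℝ} (hδ : 0 < δ) :
    Integrable fun u : ℝ => φ u * Real.exp (-δ * u) := by
  have hb : Integrable ((Ioi (0:ℝ)).indicator fun u : ℝ => M * Real.exp (-δ * u)) :=
    (integrable_indicator_iff measurableSet_Ioi).2 ((exp_neg_integrableOn_Ioi 0 hδ).const_mul M)
  refine hb.mono' (by fun_prop) (ae_of_all _ fun u => ?_)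
  by_cases hu : 0 < u
  · rw [indicator_of_mem (show u ∈ Ioi (0:ℝ) from hu), norm_mul, Real.norm_eq_abs,
      Real.norm_of_nonneg (Real.exp_pos _).le]
    gcongr
    exact hM u
  · rw [indicator_of_notMem (by simpa using hu), h0 u (not_lt.1 hu)]
    simp

/-- A damped Fejér mean of `φ` is a weighted average of the Laplace transform of `φ` along a
vertical segment. -/
lemma integral_mul_fejer_eq {φ : ℝ → ℝ} {M : ℝ} (hm : Measurable φ) (hM : ∀ u, |φ u| ≤ M)
    (h0 : ∀ u ≤ 0, φ u = 0) {G : ℂ → ℂ}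
    (hG : ∀ z : ℂ, 0 < z.re → ∫ u : ℝ, (φ u : ℂ) * Complex.exp (-z * u) = G z)
    {δ : ℝ} (hδ : 0 < δ) (l x : ℝ) :
    ∫ u : ℝ, ((φ u * Real.exp (-δ * u) * fejer (l * (x - u)) : ℝ) : ℂ) =
      ∫ t in (-1:ℝ)..1, ((1 - |t| : ℝ) : ℂ) * Complex.exp (Complex.I * (l * x) * t) *
        G (δ + Complex.I * (l * t)) := by
  set f : ℝ → ℝ → ℂ := fun u t =>
    Complex.exp (Complex.I * ((l * (x - u) : ℝ) : ℂ) * t) *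
    (((φ u * Real.exp (-δ * u) : ℝ) : ℂ) * ((1 - |t| : ℝ) : ℂ)) with hf
  have hint : Integrable (Function.uncurry f)
      ((volume : Measure ℝ).prod ((volume : Measure ℝ).restrict (Ioc (-1) 1))) := by
    have h1 : Integrable fun u : ℝ => ((φ u * Real.exp (-δ * u) : ℝ) : ℂ) :=
      (integrable_mul_exp_neg hm hM h0 hδ).ofReal
    have h2 : Integrable (fun t : ℝ => ((1 - |t| : ℝ) : ℂ))
        ((volume : Measure ℝ).restrict (Ioc (-1) 1)) :=
      ((by fun_prop : Continuous fun t : ℝ => ((1 - |t| : ℝ) : ℂ)).integrableOn_Icc).mono_set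
        Ioc_subset_Icc_self
    refine (h1.mul_prod h2).bdd_mul (c := 1) (f := fun p : ℝ × ℝ =>
      Complex.exp (Complex.I * ((l * (x - p.1) : ℝ) : ℂ) * p.2)) ?_ ?_
    · exact Continuous.aestronglyMeasurable (by fun_prop)
    · refine ae_of_all _ fun p => ?_
      rw [Complex.norm_exp]
      simp
  have hL : ∀ u : ℝ, ((φ u * Real.exp (-δ * u) * fejer (l * (x - u)) : ℝ) : ℂ) =
      ∫ t in Ioc (-1:ℝ) 1, f u t := by
    intro u
    rw [Complex.ofReal_mul, ← fejer_eq_integral,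
      intervalIntegral.integral_of_le (by norm_num), ← integral_const_mul]
    refine integral_congr_ae (ae_of_all _ fun t => ?_)
    simp only [hf]
    ring
  have hR : ∀ t : ℝ, ∫ u : ℝ, f u t =
      ((1 - |t| : ℝ) : ℂ) * Complex.exp (Complex.I * (l * x) * t) *
        G (δ + Complex.I * (l * t)) := by
    intro t
    rw [← hG _ (by simpa using hδ), ← integral_const_mul]
    refine integral_congr_ae (ae_of_all _ fun u => ?_)
    simp only [hf]
    push_cast
    have e : Complex.exp (Complex.I * (l * (x - u)) * t) * Complex.exp (-δ * u) =
        Complex.exp (Complex.I * (l * x) * t) *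
          Complex.exp (-(δ + Complex.I * (l * t)) * u) := by
      rw [← Complex.exp_add, ← Complex.exp_add]
      congr 1
      ring
    linear_combination ((φ u : ℂ) * (1 - ((|t| : ℝ) : ℂ))) * e
  simp_rw [hL]
  rw [integral_integral_swap hint, intervalIntegral.integral_of_le (by norm_num)]
  simp_rw [hR]

lemma integrable_fejer_comp {l : ℝ} (hl : 0 < l) (x : ℝ) :
    Integrable fun u => fejer (l * (x - u)) :=
  (integrable_fejer.comp_mul_left' hl.ne').comp_sub_left x

/-- If the Laplace transform of `φ` extends continuously to the imaginary axis, then the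
undamped Fejér means of `φ` are Fourier integrals over a segment of that axis. -/
lemma integral_mul_fejer_eq_boundary {φ : ℝ → ℝ} {M : ℝ} (hm : Measurable φ)
    (hM : ∀ u, |φ u| ≤ M) (h0 : ∀ u ≤ 0, φ u = 0) {G : ℂ → ℂ}
    (hGc : ContinuousOn G {z | 0 ≤ z.re})
    (hG : ∀ z : ℂ, 0 < z.re → ∫ u : ℝ, (φ u : ℂ) * Complex.exp (-z * u) = G z)
    {l : ℝ} (hl : 0 < l) (x : ℝ) :
    ((∫ u : ℝ, φ u * fejer (l * (x - u)) : ℝ) : ℂ) =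
      ∫ t in (-1:ℝ)..1, ((1 - |t| : ℝ) : ℂ) * Complex.exp (Complex.I * (l * x) * t) *
        G (Complex.I * (l * t)) := by
  have hM0 : 0 ≤ M := (abs_nonneg _).trans (hM 0)
  -- Both sides of the damped identity converge as `δ → 0⁺`, by dominated convergence.
  have hL : Tendsto (fun δ : ℝ =>
      ∫ u : ℝ, ((φ u * Real.exp (-δ * u) * fejer (l * (x - u)) : ℝ) : ℂ)) (nhdsWithin 0 (Ioi 0))
      (nhds (∫ u : ℝ, ((φ u * fejer (l * (x - u)) : ℝ) : ℂ))) := by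
    refine tendsto_integral_filter_of_dominated_convergence
      (fun u => M * fejer (l * (x - u))) ?_ ?_ ((integrable_fejer_comp hl x).const_mul M) ?_
    · have := continuous_fejer.measurable
      exact Eventually.of_forall fun δ => Measurable.aestronglyMeasurable (by fun_prop)
    · filter_upwards [self_mem_nhdsWithin] with δ hδ
      refine ae_of_all _ fun u => ?_
      rw [Complex.norm_real, norm_mul, norm_mul, Real.norm_eq_abs,
        Real.norm_of_nonneg (fejer_nonneg _), Real.norm_of_nonneg (Real.exp_pos _).le]
      refine mul_le_mul_of_nonneg_right ?_ (fejer_nonneg _)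
      rcases le_or_gt u 0 with hu | hu
      · simp [h0 u hu, hM0]
      · have : Real.exp (-δ * u) ≤ 1 := Real.exp_le_one_iff.2 (by
          have : 0 < δ * u := mul_pos hδ hu
          linarith)
        calc |φ u| * Real.exp (-δ * u) ≤ M * 1 := by
              gcongr
              exact hM u
          _ = M := mul_one M
    · refine ae_of_all _ fun u => ?_
      have : Continuous fun δ : ℝ =>
        ((φ u * Real.exp (-δ * u) * fejer (l * (x - u)) : ℝ) : ℂ) := by fun_prop
      have h := this.tendsto 0
      simp only [neg_zero, zero_mul, Real.exp_zero, mul_one] at h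
      exact h.mono_left nhdsWithin_le_nhds
  have hK : IsCompact ((Icc (0:ℝ) 1) ×ˢ (Icc (-1:ℝ) 1)) := isCompact_Icc.prod isCompact_Icc
  have hc2 : ContinuousOn (fun p : ℝ × ℝ => G (p.1 + Complex.I * (l * p.2)))
      ((Ici (0:ℝ)) ×ˢ univ) := by
    refine hGc.comp (by fun_prop) ?_
    rintro ⟨p, q⟩ ⟨h, -⟩
    simpa using h
  obtain ⟨C, hC⟩ := hK.exists_bound_of_continuousOn
    (hc2.mono (prod_mono Icc_subset_Ici_self (subset_univ _)))
  have hR : Tendsto (fun δ : ℝ =>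
      ∫ t in (-1:ℝ)..1, ((1 - |t| : ℝ) : ℂ) * Complex.exp (Complex.I * (l * x) * t) *
        G (δ + Complex.I * (l * t))) (nhdsWithin 0 (Ioi 0))
      (nhds (∫ t in (-1:ℝ)..1, ((1 - |t| : ℝ) : ℂ) * Complex.exp (Complex.I * (l * x) * t) *
        G (((0:ℝ) : ℂ) + Complex.I * (l * t)))) := by
    refine intervalIntegral.tendsto_integral_filter_of_dominated_convergence
      (fun _ => C) ?_ ?_ (by simp) ?_
    · filter_upwards [self_mem_nhdsWithin] with δ hδ
      refine Continuous.aestronglyMeasurable ?_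
      refine Continuous.mul (by fun_prop) ?_
      exact hc2.comp_continuous (f := fun t : ℝ => (δ, t)) (by fun_prop)
        fun t => ⟨mem_Ici.2 (mem_Ioi.1 hδ).le, mem_univ _⟩
    · filter_upwards [Ioo_mem_nhdsGT (zero_lt_one' ℝ)] with δ hδ
      refine ae_of_all _ fun t ht => ?_
      rw [uIoc_of_le (by norm_num)] at ht
      have ht' : t ∈ Icc (-1:ℝ) 1 := Ioc_subset_Icc_self ht
      have h1 := hC (δ, t) ⟨⟨hδ.1.le, hδ.2.le⟩, ht'⟩
      have h2 : |t| ≤ 1 := abs_le.2 ht'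
      rw [norm_mul, norm_mul, Complex.norm_real, Complex.norm_exp,
        Real.norm_of_nonneg (by linarith)]
      have h3 : (Complex.I * (l * x) * t).re = 0 := by simp
      rw [h3, Real.exp_zero, mul_one]
      calc (1 - |t|) * ‖G (δ + Complex.I * (l * t))‖ ≤ 1 * C := by
            gcongr
            · linarith [abs_nonneg t]
        _ = C := one_mul C
    · refine ae_of_all _ fun t _ => ?_
      refine Tendsto.const_mul _ ?_
      have h := (hc2 (0, t) ⟨le_refl (0:ℝ), mem_univ _⟩).tendsto
      refine h.comp (f := fun δ : ℝ => (δ, t)) ?_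
      refine tendsto_nhdsWithin_iff.2 ⟨?_, ?_⟩
      · exact ((by fun_prop : Continuous fun δ : ℝ => (δ, t)).tendsto 0).mono_left
          nhdsWithin_le_nhds
      · filter_upwards [self_mem_nhdsWithin] with δ hδ
        exact ⟨mem_Ici.2 (mem_Ioi.1 hδ).le, mem_univ _⟩
  have heq := tendsto_nhds_unique (hL.congr' (by
    filter_upwards [self_mem_nhdsWithin] with δ hδ
    exact integral_mul_fejer_eq hm hM h0 hG hδ l x)) hR
  rw [integral_complex_ofReal] at heq
  simpa using heq

/-- The Fejér means tend to zero, by the Riemann-Lebesgue lemma. -/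
lemma tendsto_integral_mul_fejer {φ : ℝ → ℝ} {M : ℝ} (hm : Measurable φ)
    (hM : ∀ u, |φ u| ≤ M) (h0 : ∀ u ≤ 0, φ u = 0) {G : ℂ → ℂ}
    (hGc : ContinuousOn G {z | 0 ≤ z.re})
    (hG : ∀ z : ℂ, 0 < z.re → ∫ u : ℝ, (φ u : ℂ) * Complex.exp (-z * u) = G z)
    {l : ℝ} (hl : 0 < l) :
    Tendsto (fun x => ∫ u : ℝ, φ u * fejer (l * (x - u))) atTop (nhds 0) := by
  have hRL := Real.tendsto_integral_exp_smul_cocompact ((Ioc (-1:ℝ) 1).indicator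
    fun t : ℝ => ((1 - |t| : ℝ) : ℂ) * G (Complex.I * (l * t)))
  -- The frequency `l * x` in Mathlib's normalization `e^{-2πi t w}` of the Fourier transform.
  have hto : Tendsto (fun x : ℝ => -(l / (2 * Real.pi)) * x) atTop (cocompact ℝ) := by
    have : Tendsto (fun x : ℝ => -(l / (2 * Real.pi)) * x) atTop atBot :=
      tendsto_id.const_mul_atTop_of_neg (by
        have := Real.pi_pos
        exact neg_neg_of_pos (by positivity))
    exact this.mono_right atBot_le_cocompact
  rw [← tendsto_ofReal_iff, Complex.ofReal_zero]
  refine (hRL.comp hto).congr fun x => ?_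
  rw [integral_mul_fejer_eq_boundary hm hM h0 hGc hG hl x,
    intervalIntegral.integral_of_le (by norm_num), ← integral_indicator measurableSet_Ioc]
  refine integral_congr_ae (ae_of_all _ fun t => ?_)
  by_cases ht : t ∈ Ioc (-1:ℝ) 1
  · simp only [indicator_of_mem ht, Circle.smul_def, Real.fourierChar_apply, smul_eq_mul]
    have e : ((2 * Real.pi * -(t * (-(l / (2 * Real.pi)) * x)) : ℝ) : ℂ) * Complex.I =
        Complex.I * (l * x) * t := by
      have : (2 * Real.pi * -(t * (-(l / (2 * Real.pi)) * x)) : ℝ) = l * x * t := by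
        have := Real.pi_ne_zero
        field_simp
      rw [this]
      push_cast
      ring
    rw [e]
    ring
  · simp [indicator_of_notMem ht]

/-! ### The Tauberian step -/

/-- A bounded function which is at least `ε` on an interval of radius `h` has, at the centre of
the interval, a sufficiently concentrated Fejér mean bounded below by a positive constant. -/
lemma exists_fejer_lower_bound {M ε h : ℝ} (hM0 : 0 ≤ M) (hε : 0 < ε) (hh : 0 < h) :
    ∃ l > 0, ∃ c > 0, ∀ φ : ℝ → ℝ, Measurable φ → (∀ u, |φ u| ≤ M) →
      ∀ x, (∀ u ∈ Icc (x - h) (x + h), ε ≤ φ u) → c ≤ ∫ u, φ u * fejer (l * (x - u)) := by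
  have hset : ∀ L : ℝ, MeasurableSet {v : ℝ | L < |v|} := fun L =>
    measurableSet_lt measurable_const measurable_norm
  have htail : Tendsto (fun L : ℝ => ∫ v, {v : ℝ | L < |v|}.indicator fejer v) atTop
      (nhds (∫ _ : ℝ, (0:ℝ))) := by
    refine tendsto_integral_filter_of_dominated_convergence fejer ?_ ?_ integrable_fejer ?_
    · exact Eventually.of_forall fun L =>
        (continuous_fejer.measurable.indicator (hset L)).aestronglyMeasurable
    · refine Eventually.of_forall fun L => ae_of_all _ fun v => ?_
      refine (norm_indicator_le_norm_self _ _).trans ?_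
      rw [Real.norm_of_nonneg (fejer_nonneg v)]
    · refine ae_of_all _ fun v => tendsto_const_nhds.congr' ?_
      filter_upwards [eventually_ge_atTop |v|] with L hL
      rw [indicator_of_notMem (by simpa using hL)]
  rw [integral_zero] at htail
  set A := ∫ y, fejer y with hA
  have hApos : 0 < A := integral_fejer_pos
  have hpos : 0 < ε * A / (2 * (ε + M)) := by positivity
  -- `L` is chosen so that the mass of the kernel outside `[-L, L]` is too small to matter; the
  -- dilation by `l = L / h` brings `[-L, L]` into the window of radius `h`.
  obtain ⟨L, hL, hL0⟩ := ((htail.eventually_lt_const hpos).and (eventually_gt_atTop 0)).exists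
  have hl : 0 < L / h := by positivity
  refine ⟨L / h, hl, (L / h)⁻¹ * (ε * A / 2), by positivity, fun φ hm hM x hx => ?_⟩
  set T := ∫ v, {v : ℝ | L < |v|}.indicator fejer v with hT
  set g : ℝ → ℝ := fun v => ε * fejer v - (ε + M) * {v : ℝ | L < |v|}.indicator fejer v with hg
  have hi : Integrable ({v : ℝ | L < |v|}.indicator fejer) :=
    integrable_fejer.indicator (hset L)
  have hgi : Integrable g := (integrable_fejer.const_mul ε).sub (hi.const_mul _)
  have hgint : ∫ v, g v = ε * A - (ε + M) * T := by
    rw [hg, integral_sub (integrable_fejer.const_mul ε) (hi.const_mul _), integral_const_mul,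
      integral_const_mul]
  have hsub : ∫ u, g (L / h * (x - u)) = (L / h)⁻¹ * ∫ v, g v := by
    rw [integral_sub_left_eq_self (fun u => g (L / h * u)), Measure.integral_comp_mul_left,
      abs_of_pos (by positivity), smul_eq_mul]
  have h1 : (L / h)⁻¹ * (ε * A / 2) ≤ ∫ u, g (L / h * (x - u)) := by
    rw [hsub, hgint]
    refine mul_le_mul_of_nonneg_left ?_ (by positivity)
    have h2 : (ε + M) * T ≤ (ε + M) * (ε * A / (2 * (ε + M))) := by gcongr
    have h3 : (ε + M) * (ε * A / (2 * (ε + M))) = ε * A / 2 := by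
      field_simp
    linarith
  refine h1.trans (integral_mono ((hgi.comp_mul_left' hl.ne').comp_sub_left x) ?_ fun u => ?_)
  · exact (integrable_fejer_comp hl x).bdd_mul (c := M) hm.aestronglyMeasurable
      (ae_of_all _ hM)
  · have hF := fejer_nonneg (L / h * (x - u))
    simp only [hg]
    by_cases hu : L < |L / h * (x - u)|
    · rw [indicator_of_mem (by simpa using hu)]
      have := (abs_le.1 (hM u)).1
      nlinarith
    · rw [indicator_of_notMem (by simpa using hu), mul_zero, sub_zero]
      refine mul_le_mul_of_nonneg_right (hx u ?_) hF
      rw [not_lt, abs_mul, abs_of_pos hl, div_mul_eq_mul_div, div_le_iff₀ hh] at hu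
      have := abs_le.1 (le_of_mul_le_mul_left hu hL0)
      constructor <;> linarith

/-- The Tauberian step: if all Fejér means of `φ` vanish at infinity and `eᵘ (φ u + 1)` is
increasing, then `φ` itself vanishes at infinity. -/
lemma tendsto_zero_of_fejer {φ : ℝ → ℝ} {M : ℝ} (hm : Measurable φ) (hM : ∀ u, |φ u| ≤ M)
    (hpos : ∀ u, 0 < u → 0 ≤ φ u + 1)
    (hmono : ∀ u v, 0 < u → u ≤ v → Real.exp u * (φ u + 1) ≤ Real.exp v * (φ v + 1))
    (hK : ∀ l : ℝ, 0 < l →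
      Tendsto (fun x => ∫ u : ℝ, φ u * fejer (l * (x - u))) atTop (nhds 0)) :
    Tendsto φ atTop (nhds 0) := by
  have hM0 : 0 ≤ M := (abs_nonneg _).trans (hM 0)
  rw [Metric.tendsto_nhds]
  intro ε hε
  -- Over a window of length `2 * h` the monotonicity of `eᵘ (φ u + 1)` costs at most the factor
  -- `r`, so `|φ x| ≥ ε` forces `|φ| ≥ ε / 4` on a whole window next to `x`.
  set r : ℝ := (1 + ε / 2) / (1 + ε / 4) with hr
  have hr1 : 1 < r := by rw [hr, lt_div_iff₀ (by positivity)]; linarith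
  set h : ℝ := Real.log r / 2 with hh
  have hh0 : 0 < h := by have := Real.log_pos hr1; positivity
  have hexp : Real.exp (2 * h) = r := by
    rw [hh, mul_div_cancel₀ _ two_ne_zero, Real.exp_log (by linarith)]
  have hcmp : ∀ u v, 0 < u → u ≤ v → v ≤ u + 2 * h → φ u + 1 ≤ r * (φ v + 1) := by
    intro u v hu huv hv
    have h1 := hmono u v hu huv
    have h2 : Real.exp v ≤ Real.exp u * r := by
      rw [← hexp, ← Real.exp_add]; exact Real.exp_le_exp.2 hv
    have h3 := mul_le_mul_of_nonneg_right h2 (hpos v (hu.trans_le huv))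
    refine le_of_mul_le_mul_left ?_ (Real.exp_pos u)
    rw [← mul_assoc]
    exact h1.trans h3
  have hr2 : r * (1 + ε / 4) = 1 + ε / 2 := by rw [hr]; field_simp
  obtain ⟨l, hl, c, hc, H⟩ := exists_fejer_lower_bound (ε := ε / 4) hM0 (by positivity) hh0
  have hup : ∀ᶠ x in atTop, ∫ u : ℝ, φ u * fejer (l * (x + h - u)) < c :=
    ((hK l hl).comp (tendsto_atTop_add_const_right _ h tendsto_id)).eventually_lt_const hc
  have hlo : ∀ᶠ x in atTop, -c < ∫ u : ℝ, φ u * fejer (l * (x - h - u)) :=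
    ((hK l hl).comp (tendsto_atTop_add_const_right _ (-h) tendsto_id)).eventually_const_lt
      (neg_lt_zero.2 hc)
  filter_upwards [hup, hlo, eventually_gt_atTop (2 * h)] with x hx1 hx2 hx3
  rw [dist_zero_right, Real.norm_eq_abs, abs_lt]
  constructor
  -- A very negative value at `x` persists to the left, a large one to the right.
  · by_contra! hcon
    have := H (fun u => -φ u) hm.neg (fun u => by simpa using hM u) (x - h) (fun u hu => by
      have h1 := hcmp u x (by linarith [hu.1]) (by linarith [hu.2]) (by linarith [hu.1])
      have h2 : r * (φ x + 1) ≤ r * (1 - ε) := by gcongr; linarith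
      have h3 : r * (1 - ε) ≤ 1 - ε / 4 := by
        rw [hr, div_mul_eq_mul_div, div_le_iff₀ (by positivity)]
        nlinarith
      linarith)
    simp only [neg_mul, integral_neg] at this
    linarith
  · by_contra! hcon
    have := H φ hm hM (x + h) (fun u hu => by
      have h1 := hcmp x u (by linarith) (by linarith [hu.1]) (by linarith [hu.2])
      by_contra! h4
      have h2 : r * (φ u + 1) ≤ r * (1 + ε / 4) :=
        mul_le_mul_of_nonneg_left (by linarith) (by linarith)
      linarith)
    linarith

/-! ### The prime number theorem -/

/-- The normalized error term `ψ(eᵘ) e⁻ᵘ - 1` of the Chebyshev function on a logarithmic scale,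
extended by zero to `u ≤ 0`. -/
def chebErr (u : ℝ) : ℝ :=
  (Ioi (0:ℝ)).indicator (fun u => Chebyshev.psi (Real.exp u) * Real.exp (-u) - 1) u

lemma chebErr_of_pos {u : ℝ} (hu : 0 < u) :
    chebErr u = Chebyshev.psi (Real.exp u) * Real.exp (-u) - 1 :=
  indicator_of_mem (s := Ioi (0:ℝ)) hu _

lemma chebErr_of_nonpos {u : ℝ} (hu : u ≤ 0) : chebErr u = 0 :=
  indicator_of_notMem (s := Ioi (0:ℝ)) (by simpa using hu) _

lemma measurable_chebErr : Measurable chebErr := by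
  have := Chebyshev.psi_mono.measurable
  exact Measurable.indicator (by fun_prop) measurableSet_Ioi

lemma exp_mul_chebErr_add_one {u : ℝ} (hu : 0 < u) :
    Real.exp u * (chebErr u + 1) = Chebyshev.psi (Real.exp u) := by
  rw [chebErr_of_pos hu, sub_add_cancel, mul_comm, mul_assoc, ← Real.exp_add]
  simp

lemma abs_chebErr_le (u : ℝ) : |chebErr u| ≤ Real.log 4 + 5 := by
  have hlog : 0 ≤ Real.log 4 := Real.log_nonneg (by norm_num)
  rcases le_or_gt u 0 with hu | hu
  · rw [chebErr_of_nonpos hu, abs_zero]; linarith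
  · have h1 := Chebyshev.psi_le_const_mul_self (Real.exp_pos u).le
    have h2 := Chebyshev.psi_nonneg (Real.exp u)
    rw [← exp_mul_chebErr_add_one hu] at h1 h2
    have h3 := nonneg_of_mul_nonneg_right h2 (Real.exp_pos u)
    rw [mul_comm] at h1
    have h4 := le_of_mul_le_mul_right h1 (Real.exp_pos u)
    rw [abs_le]
    constructor <;> linarith

open ArithmeticFunction in
/-- The Laplace representation of `-ζ'/ζ`, the L-series of `Λ`. -/
lemma LSeries_vonMangoldt_eq_integral_psi {s : ℂ} (hs : 1 < s.re) :
    LSeries (fun n => (vonMangoldt n : ℂ)) s =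
      s * ∫ t in Ioi (1:ℝ), (Chebyshev.psi t : ℂ) * (t : ℂ) ^ (-(s + 1)) := by
  have hsum : ∀ n : ℕ, ∑ k ∈ Finset.Icc 1 n, vonMangoldt k = Chebyshev.psi n := by
    intro n
    rw [Chebyshev.psi, Nat.floor_natCast]
    rfl
  rw [LSeries_eq_mul_integral_of_nonneg (fun n => vonMangoldt n) zero_le_one hs ?_
    (fun n => vonMangoldt_nonneg)]
  · congr 1
    refine setIntegral_congr_fun measurableSet_Ioi fun t _ => ?_
    have := hsum ⌊t⌋₊
    rw [← Chebyshev.psi_eq_psi_coe_floor] at this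
    simp only [← this]
    push_cast
    rfl
  · refine Asymptotics.IsBigO.of_bound (Real.log 4 + 4) (Eventually.of_forall fun n => ?_)
    rw [hsum, Real.norm_of_nonneg (Chebyshev.psi_nonneg _), Real.rpow_one,
      Real.norm_of_nonneg (Nat.cast_nonneg n)]
    exact Chebyshev.psi_le_const_mul_self (Nat.cast_nonneg n)

lemma exp_image_Ioi_zero : Real.exp '' Ioi 0 = Ioi 1 := by
  ext t
  constructor
  · rintro ⟨u, hu, rfl⟩
    exact Real.one_lt_exp_iff.2 hu
  · intro ht
    exact ⟨Real.log t, Real.log_pos ht, Real.exp_log (zero_lt_one.trans ht)⟩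

lemma integral_psi_eq_integral_exp (z : ℂ) :
    ∫ t in Ioi (1:ℝ), (Chebyshev.psi t : ℂ) * (t : ℂ) ^ (-(1 + z + 1)) =
      ∫ u in Ioi (0:ℝ), ((Chebyshev.psi (Real.exp u) * Real.exp (-u) : ℝ) : ℂ) *
        Complex.exp (-z * u) := by
  rw [← exp_image_Ioi_zero, integral_image_eq_integral_abs_deriv_smul measurableSet_Ioi
    (fun u _ => (Real.hasDerivAt_exp u).hasDerivWithinAt) Real.exp_injective.injOn]
  refine setIntegral_congr_fun measurableSet_Ioi fun u _ => ?_
  have e : ((Real.exp u : ℝ) : ℂ) ^ (-(1 + z + 1)) = Complex.exp (-(1 + z + 1) * u) := by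
    rw [Complex.cpow_def_of_ne_zero (by exact_mod_cast (Real.exp_pos u).ne'),
      ← Complex.ofReal_log (Real.exp_pos u).le, Real.log_exp, mul_comm]
  simp only [abs_of_pos (Real.exp_pos u), e, Complex.real_smul]
  push_cast
  have e2 : Complex.exp u * Complex.exp (-(1 + z + 1) * u) =
      Complex.exp (-u) * Complex.exp (-z * u) := by
    rw [← Complex.exp_add, ← Complex.exp_add]
    congr 1
    ring
  linear_combination (Chebyshev.psi (Real.exp u) : ℂ) * e2

open ArithmeticFunction ArithmeticFunction.vonMangoldt in
/-- The Laplace transform of the error term, in the form that extends continuously to the closed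
half-plane: it only involves `-ζ'/ζ(s) - 1/(s-1)` at `s = 1 + z`, which Mathlib provides as the
auxiliary function for the residue class modulo `1`. -/
lemma integral_chebErr_mul_exp {z : ℂ} (hz : 0 < z.re) :
    ∫ u : ℝ, (chebErr u : ℂ) * Complex.exp (-z * u) =
      (LFunctionResidueClassAux (1 : ZMod 1) (1 + z) - 1) / (1 + z) := by
  have hs : 1 < (1 + z).re := by simpa using hz
  have hz0 : z ≠ 0 := by rintro rfl; simp at hz
  have hz1 : 1 + z ≠ 0 := by
    intro h
    rw [h] at hs
    simp at hs
    linarith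
  have hA : LFunctionResidueClassAux (1 : ZMod 1) (1 + z) =
      LSeries (fun n => (vonMangoldt n : ℂ)) (1 + z) - 1 / z := by
    rw [eqOn_LFunctionResidueClassAux (q := 1) (a := 1) isUnit_one hs]
    have : ∀ n : ℕ, residueClass (1 : ZMod 1) n = vonMangoldt n := fun n =>
      indicator_of_mem (by exact Subsingleton.elim _ _) _
    simp [this]
  have hI1 : IntegrableOn (fun u : ℝ => ((chebErr u : ℝ) : ℂ) * Complex.exp (-z * u))
      (Ioi 0) := by
    have := integrableOn_exp_mul_complex_Ioi (a := -z) (by simpa using hz) 0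
    refine Integrable.bdd_mul (c := Real.log 4 + 5) this ?_ (ae_of_all _ fun u => ?_)
    · have := measurable_chebErr
      exact Measurable.aestronglyMeasurable (by fun_prop)
    · rw [Complex.norm_real]
      exact abs_chebErr_le u
  have hI2 : IntegrableOn (fun u : ℝ => Complex.exp (-z * u)) (Ioi 0) :=
    integrableOn_exp_mul_complex_Ioi (a := -z) (by simpa using hz) 0
  have h1 : ∫ u : ℝ, (chebErr u : ℂ) * Complex.exp (-z * u) =
      ∫ u in Ioi (0:ℝ), (chebErr u : ℂ) * Complex.exp (-z * u) := by
    refine (setIntegral_eq_integral_of_forall_compl_eq_zero fun u hu => ?_).symm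
    rw [chebErr_of_nonpos (by simpa using hu)]
    simp
  have h2 := LSeries_vonMangoldt_eq_integral_psi hs
  rw [integral_psi_eq_integral_exp] at h2
  have h3 : ∫ u in Ioi (0:ℝ), ((Chebyshev.psi (Real.exp u) * Real.exp (-u) : ℝ) : ℂ) *
        Complex.exp (-z * u) =
      (∫ u in Ioi (0:ℝ), (chebErr u : ℂ) * Complex.exp (-z * u)) + 1 / z := by
    have h4 : ∫ u in Ioi (0:ℝ), Complex.exp (-z * u) = 1 / z := by
      rw [integral_exp_mul_complex_Ioi (a := -z) (by simpa using hz) 0]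
      simp
    rw [← h4, ← integral_add hI1 hI2]
    refine setIntegral_congr_fun measurableSet_Ioi fun u hu => ?_
    simp only [chebErr_of_pos hu]
    push_cast
    ring
  rw [h3] at h2
  rw [h1, hA, h2]
  field_simp
  ring

open ArithmeticFunction.vonMangoldt in
/-- The prime number theorem for `ψ`. -/
theorem tendsto_chebErr : Tendsto chebErr atTop (nhds 0) := by
  refine tendsto_zero_of_fejer measurable_chebErr abs_chebErr_le ?_ ?_ fun l hl => ?_
  · intro u hu
    have h2 := Chebyshev.psi_nonneg (Real.exp u)
    rw [← exp_mul_chebErr_add_one hu] at h2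
    exact nonneg_of_mul_nonneg_right h2 (Real.exp_pos u)
  · intro u v hu huv
    rw [exp_mul_chebErr_add_one hu, exp_mul_chebErr_add_one (hu.trans_le huv)]
    exact Chebyshev.psi_mono (Real.exp_le_exp.2 huv)
  · refine tendsto_integral_mul_fejer measurable_chebErr abs_chebErr_le
      (fun u hu => chebErr_of_nonpos hu)
      (G := fun z => (LFunctionResidueClassAux (1 : ZMod 1) (1 + z) - 1) / (1 + z))
      ?_ (fun z hz => integral_chebErr_mul_exp hz) hl
    refine ContinuousOn.div (ContinuousOn.sub ?_ continuousOn_const) (by fun_prop) ?_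
    · refine (continuousOn_LFunctionResidueClassAux (1 : ZMod 1)).comp (by fun_prop) ?_
      intro z hz
      simpa using hz
    · intro z hz h
      have : (1 + z).re = 0 := by rw [h]; simp
      simp at this
      have hz' : 0 ≤ z.re := hz
      linarith

/-- The prime number theorem, as `π(x) log x / x → 1`. -/
theorem tendsto_primeCounting_mul_log_div :
    Tendsto (fun x : ℝ => (Nat.primeCounting ⌊x⌋₊ : ℝ) * Real.log x / x) atTop (nhds 1) := by
  have h1 : Tendsto (fun x => Chebyshev.psi x / x) atTop (nhds 1) := by
    have := (tendsto_chebErr.comp Real.tendsto_log_atTop).add_const 1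
    rw [zero_add] at this
    refine this.congr' ?_
    filter_upwards [eventually_gt_atTop 1] with x hx
    have hx0 : 0 < x := by linarith
    simp only [Function.comp_apply]
    rw [chebErr_of_pos (Real.log_pos hx), Real.exp_neg, Real.exp_log hx0]
    ring
  -- Prime powers contribute only `O(√x)`, hence `ψ` and `θ` agree to first order.
  have h2 : Tendsto (fun x => (Chebyshev.psi - Chebyshev.theta) x / x) atTop (nhds 0) := by
    refine (Chebyshev.isBigO_psi_sub_theta_sqrt.trans_isLittleO ?_).tendsto_div_nhds_zero
    refine (Asymptotics.isLittleO_iff_tendsto' ?_).2 ?_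
    · filter_upwards [eventually_gt_atTop 0] with x hx h
      exact absurd h hx.ne'
    · have := tendsto_inv_atTop_zero.comp Real.tendsto_sqrt_atTop
      refine this.congr fun x => ?_
      simp [Real.sqrt_div_self']
  have h3 : Tendsto (fun x => Chebyshev.theta x / x) atTop (nhds 1) := by
    have := h1.sub h2
    rw [sub_zero] at this
    refine this.congr fun x => ?_
    simp only [Pi.sub_apply]
    ring
  have h4 : Tendsto (fun x : ℝ => ((Nat.primeCounting ⌊x⌋₊ : ℝ) - Chebyshev.theta x / Real.log x) /
      (x / Real.log x)) atTop (nhds 0) := by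
    refine (Chebyshev.primeCounting_sub_theta_div_log_isBigO.trans_isLittleO
      ?_).tendsto_div_nhds_zero
    refine (Asymptotics.isLittleO_iff_tendsto' ?_).2 ?_
    · filter_upwards [eventually_gt_atTop 1] with x hx h
      exact absurd h (div_pos (by linarith) (Real.log_pos hx)).ne'
    · refine (tendsto_inv_atTop_zero.comp Real.tendsto_log_atTop).congr' ?_
      filter_upwards [eventually_gt_atTop 1] with x hx
      have := Real.log_pos hx
      have : 0 < x := by linarith
      simp only [Function.comp_apply]
      field_simp
  have h5 := h4.add h3
  rw [zero_add] at h5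
  refine h5.congr' ?_
  filter_upwards [eventually_gt_atTop 1] with x hx
  have := Real.log_pos hx
  have : 0 < x := by linarith
  field_simp
  ring

/-! ### Lattice points with prime coordinates in an oval -/

/-- The prime number theorem along a dilated argument; the scale `log R / R` does not depend on
the dilation factor `α`. -/
lemma tendsto_primeCounting_dilate {α : ℝ} (hα : 0 ≤ α) :
    Tendsto (fun R : ℝ => (Nat.primeCounting ⌊α * R⌋₊ : ℝ) * Real.log R / R) atTop (nhds α) := by
  rcases hα.eq_or_lt with rfl | hα
  · simp
  have h1 : Tendsto (fun R : ℝ => α * R) atTop atTop := tendsto_id.const_mul_atTop hα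
  have h2 := tendsto_primeCounting_mul_log_div.comp h1
  have h3 : Tendsto (fun R : ℝ => 1 + Real.log α / Real.log R) atTop (nhds 1) := by
    simpa using (tendsto_const_nhds (x := Real.log α)).div_atTop Real.tendsto_log_atTop
      |>.const_add 1
  have h4 := (h2.div h3 one_ne_zero).const_mul α
  rw [div_one, mul_one] at h4
  refine h4.congr' ?_
  filter_upwards [eventually_gt_atTop 1, h1.eventually_gt_atTop 1] with R hR hR'
  have hl := Real.log_pos hR
  have hR0 : 0 < R := by linarith
  have hl' := Real.log_pos hR'
  have e : 1 + Real.log α / Real.log R = Real.log (α * R) / Real.log R := by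
    rw [Real.log_mul hα.ne' hR0.ne']
    field_simp
    ring
  simp only [Function.comp_apply, Pi.div_apply]
  rw [e]
  field_simp

/-- The primes up to the real number `t`. -/
def primesUpTo (t : ℝ) : Finset ℕ := (Finset.range (⌊t⌋₊ + 1)).filter Nat.Prime

lemma mem_primesUpTo {t : ℝ} (ht : 0 ≤ t) {p : ℕ} :
    p ∈ primesUpTo t ↔ (p : ℝ) ≤ t ∧ p.Prime := by
  simp [primesUpTo, Nat.le_floor_iff ht]

lemma card_primesUpTo (t : ℝ) : (primesUpTo t).card = Nat.primeCounting ⌊t⌋₊ := by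
  rw [primesUpTo, Nat.primeCounting, Nat.primeCounting', Nat.count_eq_card_filter_range]

namespace SymmetricOval

variable (O : SymmetricOval)

lemma f_nonneg {x : ℝ} (hx : x ∈ Icc 0 O.a) : 0 ≤ O.f x := by
  rw [← O.f_a]
  exact O.f_anti.antitoneOn hx ⟨O.a_pos.le, le_rfl⟩ hx.2

lemma mem_smul_region {R : ℝ} (hR : 0 < R) (x y : ℝ) :
    (x, y) ∈ R • O.region ↔ |x| ≤ O.a * R ∧ |y| ≤ O.f (|x| / R) * R := by
  rw [Set.mem_smul_set_iff_inv_smul_mem₀ hR.ne']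
  simp only [region, Prod.smul_mk, smul_eq_mul, Set.mem_ofPred_eq, abs_mul, abs_inv,
    abs_of_pos hR]
  rw [inv_mul_le_iff₀ hR, inv_mul_le_iff₀ hR, mul_comm R, mul_comm R, inv_mul_eq_div]

/-- The four choices of signs reduce the count to the first quadrant, where it is a sum over the
vertical lines with prime abscissa. -/
lemma primeCount_eq {R : ℝ} (hR : 0 < R) :
    O.primeCount R =
      4 * ∑ p ∈ primesUpTo (O.a * R), Nat.primeCounting ⌊O.f (p / R) * R⌋₊ := by
  have haR : 0 ≤ O.a * R := mul_nonneg O.a_pos.le hR.le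
  set T := (primesUpTo (O.a * R)).sigma fun p => primesUpTo (O.f (p / R) * R) with hT
  have hmem : ∀ p q : ℕ, (⟨p, q⟩ : Σ _ : ℕ, ℕ) ∈ T ↔
      ((p : ℝ) ≤ O.a * R ∧ (q : ℝ) ≤ O.f (p / R) * R) ∧ p.Prime ∧ q.Prime := by
    intro p q
    rw [hT, Finset.mem_sigma, mem_primesUpTo haR]
    constructor
    · rintro ⟨⟨h1, h2⟩, h3⟩
      rw [mem_primesUpTo] at h3
      · exact ⟨⟨h1, h3.1⟩, h2, h3.2⟩
      · exact mul_nonneg (O.f_nonneg ⟨by positivity, (div_le_iff₀ hR).2 h1⟩) hR.le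
    · rintro ⟨⟨h1, h2⟩, h3, h4⟩
      exact ⟨⟨h1, h3⟩, (mem_primesUpTo ((Nat.cast_nonneg q).trans h2)).2 ⟨h2, h4⟩⟩
  have hcond : ∀ m n : ℤ, (((m : ℝ), (n : ℝ)) ∈ R • O.region ∧ m.natAbs.Prime ∧ n.natAbs.Prime) ↔
      (⟨m.natAbs, n.natAbs⟩ : Σ _ : ℕ, ℕ) ∈ T := by
    intro m n
    rw [hmem, O.mem_smul_region hR, Nat.cast_natAbs, Nat.cast_natAbs, Int.cast_abs, Int.cast_abs]
  have habs : ∀ (u : ℤˣ) (p : ℕ), ((u : ℤ) * p).natAbs = p := by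
    intro u p
    rw [Int.natAbs_mul, Int.units_natAbs, one_mul, Int.natAbs_natCast]
  have hbij : Function.Bijective (fun x : T × ℤˣ × ℤˣ =>
      (⟨((x.2.1 : ℤ) * x.1.1.1, (x.2.2 : ℤ) * x.1.1.2), (hcond _ _).2 (by
        rw [habs, habs]; exact x.1.2)⟩ :
        {p : ℤ × ℤ // ((p.1 : ℝ), (p.2 : ℝ)) ∈ R • O.region ∧
          p.1.natAbs.Prime ∧ p.2.natAbs.Prime})) := by
    constructor
    · rintro ⟨⟨⟨p, q⟩, h⟩, u, v⟩ ⟨⟨⟨p', q'⟩, h'⟩, u', v'⟩ he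
      simp only [Subtype.mk.injEq, Prod.mk.injEq] at he
      obtain ⟨h1, h2⟩ := he
      have e1 : p = p' := by rw [← habs u p, h1, habs]
      have e2 : q = q' := by rw [← habs v q, h2, habs]
      subst e1 e2
      have hp := ((hmem _ _).1 h).2.1.ne_zero
      have hq := ((hmem _ _).1 h).2.2.ne_zero
      have e3 : u = u' := Units.ext (mul_right_cancel₀ (Int.natCast_ne_zero.2 hp) h1)
      have e4 : v = v' := Units.ext (mul_right_cancel₀ (Int.natCast_ne_zero.2 hq) h2)
      rw [e3, e4]
    · rintro ⟨⟨m, n⟩, h⟩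
      have hs : ∀ k : ℤ, k.natAbs.Prime → ∃ u : ℤˣ, (u : ℤ) * k.natAbs = k := by
        intro k _
        rcases Int.natAbs_eq k with h | h
        · exact ⟨1, by simpa using h.symm⟩
        · exact ⟨-1, by simpa using h.symm⟩
      obtain ⟨u, hu⟩ := hs m h.2.1
      obtain ⟨v, hv⟩ := hs n h.2.2
      exact ⟨⟨⟨⟨m.natAbs, n.natAbs⟩, (hcond m n).1 h⟩, u, v⟩,
        Subtype.ext (Prod.ext hu hv)⟩
  rw [primeCount, ← Nat.card_eq_of_bijective _ hbij, Nat.card_prod, Nat.card_prod]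
  have hu : Nat.card ℤˣ = 2 := by simp
  rw [hu, Nat.card_eq_fintype_card, Fintype.card_coe, hT, Finset.card_sigma, mul_comm]
  simp only [card_primesUpTo]

/-- A sum over the primes in `(0, x N * R]`, cut at the points `x i * R`. -/
lemma sum_primesUpTo_eq (R : ℝ) (hR : 0 < R) (F : ℕ → ℝ) (x : ℕ → ℝ) (hx : Monotone x)
    (hx0 : x 0 = 0) (N : ℕ) :
    ∑ p ∈ primesUpTo (x N * R), F p =
      ∑ i ∈ Finset.range N, ∑ p ∈ primesUpTo (x (i + 1) * R) \ primesUpTo (x i * R), F p := by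
  have h0 : ∀ i, 0 ≤ x i := fun i => hx0 ▸ hx (Nat.zero_le i)
  have hsub : ∀ i, primesUpTo (x i * R) ⊆ primesUpTo (x (i + 1) * R) := by
    intro i p hp
    rw [mem_primesUpTo (mul_nonneg (h0 _) hR.le)] at hp ⊢
    exact ⟨hp.1.trans (mul_le_mul_of_nonneg_right (hx (Nat.le_succ i)) hR.le), hp.2⟩
  have he : primesUpTo (x 0 * R) = ∅ := by
    rw [← Finset.card_eq_zero, card_primesUpTo, hx0]
    simp
  simp only [Finset.sum_sdiff_eq_sub (hsub _)]
  rw [Finset.sum_range_sub (fun i => ∑ p ∈ primesUpTo (x i * R), F p), he]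
  simp

lemma card_primesUpTo_sdiff {s t : ℝ} (hs : 0 ≤ s) (hst : s ≤ t) :
    ((primesUpTo t \ primesUpTo s).card : ℝ) =
      Nat.primeCounting ⌊t⌋₊ - Nat.primeCounting ⌊s⌋₊ := by
  have hsub : primesUpTo s ⊆ primesUpTo t := by
    intro p hp
    rw [mem_primesUpTo hs] at hp
    exact (mem_primesUpTo (hs.trans hst)).2 ⟨hp.1.trans hst, hp.2⟩
  rw [Finset.card_sdiff_of_subset hsub, Nat.cast_sub (Finset.card_le_card hsub),
    card_primesUpTo, card_primesUpTo]

/-- The `i`-th of the points dividing `[0, a]` into `N` equal parts. -/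
def grid (N i : ℕ) : ℝ := O.a / N * i

lemma grid_mono (N : ℕ) : Monotone (O.grid N) := by
  intro i j hij
  have := O.a_pos
  unfold grid
  gcongr

lemma grid_zero (N : ℕ) : O.grid N 0 = 0 := by simp [grid]

lemma grid_nonneg (N i : ℕ) : 0 ≤ O.grid N i := by
  have := O.a_pos
  unfold grid
  positivity

lemma grid_self {N : ℕ} (hN : 0 < N) : O.grid N N = O.a := by
  have : (N : ℝ) ≠ 0 := by positivity
  unfold grid
  field_simp

lemma grid_mem {N i : ℕ} (hN : 0 < N) (hi : i ≤ N) : O.grid N i ∈ Icc 0 O.a :=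
  ⟨O.grid_nonneg N i, (O.grid_mono N hi).trans (O.grid_self hN).le⟩

/-- Prime-weighted Riemann sum of `f` for the grid of mesh `a / N`, where `e = 0` selects left
endpoints and `e = 1` right endpoints. -/
def primeRiemannSum (N e : ℕ) (R : ℝ) : ℝ :=
  4 * ∑ i ∈ Finset.range N, ((Nat.primeCounting ⌊O.grid N (i + 1) * R⌋₊ : ℝ) -
    Nat.primeCounting ⌊O.grid N i * R⌋₊) * Nat.primeCounting ⌊O.f (O.grid N (i + e)) * R⌋₊

/-- Monotonicity of `f` puts the lattice count between the two prime-weighted Riemann sums. -/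
lemma primeCount_mem_Icc {N : ℕ} (hN : 0 < N) {R : ℝ} (hR : 0 < R) :
    (O.primeCount R : ℝ) ∈ Icc (O.primeRiemannSum N 1 R) (O.primeRiemannSum N 0 R) := by
  have key : ∀ i ∈ Finset.range N,
      ∀ p ∈ primesUpTo (O.grid N (i + 1) * R) \ primesUpTo (O.grid N i * R),
      Nat.primeCounting ⌊O.f (O.grid N (i + 1)) * R⌋₊ ≤ Nat.primeCounting ⌊O.f (p / R) * R⌋₊ ∧
      Nat.primeCounting ⌊O.f (p / R) * R⌋₊ ≤ Nat.primeCounting ⌊O.f (O.grid N i) * R⌋₊ := by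
    intro i hi p hp
    rw [Finset.mem_range] at hi
    have h0 := O.grid_mem hN hi.le
    have h1 := O.grid_mem hN (Nat.succ_le_of_lt hi)
    rw [Finset.mem_sdiff, mem_primesUpTo (mul_nonneg h1.1 hR.le),
      mem_primesUpTo (mul_nonneg h0.1 hR.le)] at hp
    have hp1 : p / R ≤ O.grid N (i + 1) := (div_le_iff₀ hR).2 hp.1.1
    have hp0 : O.grid N i ≤ p / R := by
      rw [le_div_iff₀ hR]
      by_contra h
      exact hp.2 ⟨(not_le.1 h).le, hp.1.2⟩
    have hpm : (p / R : ℝ) ∈ Icc 0 O.a := ⟨h0.1.trans hp0, hp1.trans h1.2⟩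
    constructor <;> refine Nat.monotone_primeCounting (Nat.floor_mono
      (mul_le_mul_of_nonneg_right ?_ hR.le))
    · exact O.f_anti.antitoneOn hpm h1 hp1
    · exact O.f_anti.antitoneOn h0 hpm hp0
  have hcard : ∀ i, ((primesUpTo (O.grid N (i + 1) * R) \ primesUpTo (O.grid N i * R)).card : ℝ) =
      (Nat.primeCounting ⌊O.grid N (i + 1) * R⌋₊ : ℝ) -
        Nat.primeCounting ⌊O.grid N i * R⌋₊ := fun i =>
    card_primesUpTo_sdiff (mul_nonneg (O.grid_nonneg N i) hR.le)
      (mul_le_mul_of_nonneg_right (O.grid_mono N (Nat.le_succ i)) hR.le)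
  rw [O.primeCount_eq hR, ← O.grid_self hN, Nat.cast_mul, Nat.cast_sum,
    sum_primesUpTo_eq R hR (fun p => (Nat.primeCounting ⌊O.f (p / R) * R⌋₊ : ℝ)) _
      (O.grid_mono N) (O.grid_zero N)]
  unfold primeRiemannSum
  simp only [← hcard]
  constructor
  · refine mul_le_mul_of_nonneg_left (Finset.sum_le_sum fun i hi => ?_) (by norm_num)
    rw [← nsmul_eq_mul]
    exact Finset.card_nsmul_le_sum _ _ _ fun p hp => Nat.cast_le.2 (key i hi p hp).1
  · refine mul_le_mul_of_nonneg_left (Finset.sum_le_sum fun i hi => ?_) (by norm_num)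
    rw [← nsmul_eq_mul]
    exact Finset.sum_le_card_nsmul _ _ _ fun p hp => Nat.cast_le.2 (key i hi p hp).2

/-- The Riemann sum for the area with left (`e = 0`) or right (`e = 1`) endpoints. -/
def riemannSum (N e : ℕ) : ℝ :=
  4 * ∑ i ∈ Finset.range N, O.a / N * O.f (O.grid N (i + e))

lemma tendsto_primeRiemannSum {N e : ℕ} (hN : 0 < N) (he : e ≤ 1) :
    Tendsto (fun R : ℝ => O.primeRiemannSum N e R * (Real.log R / R) ^ 2) atTop
      (nhds (O.riemannSum N e)) := by
  have h : Tendsto (fun R : ℝ => 4 * ∑ i ∈ Finset.range N,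
      ((Nat.primeCounting ⌊O.grid N (i + 1) * R⌋₊ : ℝ) * Real.log R / R -
        (Nat.primeCounting ⌊O.grid N i * R⌋₊ : ℝ) * Real.log R / R) *
      ((Nat.primeCounting ⌊O.f (O.grid N (i + e)) * R⌋₊ : ℝ) * Real.log R / R)) atTop
      (nhds (O.riemannSum N e)) := by
    refine (tendsto_finsetSum _ fun i hi => ?_).const_mul 4
    have e1 : O.a / N = O.grid N (i + 1) - O.grid N i := by
      simp only [grid]
      push_cast
      ring
    rw [e1]
    rw [Finset.mem_range] at hi
    exact ((tendsto_primeCounting_dilate (O.grid_nonneg N _)).sub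
      (tendsto_primeCounting_dilate (O.grid_nonneg N _))).mul
      (tendsto_primeCounting_dilate (O.f_nonneg (O.grid_mem hN (by omega))))
  refine h.congr fun R => ?_
  rw [primeRiemannSum, mul_assoc, Finset.sum_mul]
  congr 1
  refine Finset.sum_congr rfl fun i _ => ?_
  ring

/-- The difference telescopes, as `f 0 = b` and `f a = 0`. -/
lemma riemannSum_sub {N : ℕ} (hN : 0 < N) :
    O.riemannSum N 0 - O.riemannSum N 1 = 4 * O.a * O.b / N := by
  unfold riemannSum
  rw [← mul_sub, ← Finset.mul_sum, ← Finset.mul_sum, ← mul_sub, ← Finset.sum_sub_distrib]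
  have := Finset.sum_range_sub' (fun i => O.f (O.grid N i)) N
  simp only [add_zero]
  rw [this, O.grid_self hN, O.grid_zero, O.f_a, O.f_zero]
  ring

lemma f_abs (x : ℝ) : O.f |x| = O.f x := by
  rcases abs_choice x with h | h <;> simp [h, O.f_even]

lemma isClosed_region : IsClosed O.region := by
  have hc : ContinuousOn (fun p : ℝ × ℝ => O.f p.1 - |p.2|) {p : ℝ × ℝ | |p.1| ≤ O.a} :=
    (O.f_cont.comp continuousOn_fst fun p hp => abs_le.1 hp).sub
      (continuous_snd.abs).continuousOn
  have hs : IsClosed {p : ℝ × ℝ | |p.1| ≤ O.a} :=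
    isClosed_le continuous_fst.abs continuous_const
  convert hc.preimage_isClosed_of_isClosed hs (isClosed_Ici (a := (0 : ℝ))) using 1
  ext p
  simp [region, f_abs]

lemma area_eq : O.area = 4 * ∫ x in (0 : ℝ)..O.a, O.f x := by
  have ha := O.a_pos
  have hnn : ∀ x ∈ Icc (-O.a) O.a, 0 ≤ O.f x := fun x hx =>
    O.f_abs x ▸ O.f_nonneg ⟨abs_nonneg x, abs_le.2 hx⟩
  have hint : IntegrableOn (fun x => 2 * O.f x) (Icc (-O.a) O.a) :=
    (O.f_cont.integrableOn_Icc).const_mul 2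
  have hsec : ∀ x, volume (Prod.mk x ⁻¹' O.region) =
      (Icc (-O.a) O.a).indicator (fun x => ENNReal.ofReal (2 * O.f x)) x := by
    intro x
    by_cases hx : x ∈ Icc (-O.a) O.a
    · have : Prod.mk x ⁻¹' O.region = Icc (-O.f x) (O.f x) := by
        ext y
        simp [region, f_abs, abs_le.2 hx, ← abs_le]
      rw [this, Real.volume_Icc, indicator_of_mem hx]
      ring_nf
    · have : Prod.mk x ⁻¹' O.region = ∅ := by
        ext y
        simpa [region] using fun h => absurd (abs_le.1 h) hx
      rw [this, measure_empty, indicator_of_notMem hx]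
  have hvol : volume O.region = ENNReal.ofReal (∫ x in Icc (-O.a) O.a, 2 * O.f x) := by
    rw [Measure.volume_eq_prod, Measure.prod_apply O.isClosed_region.measurableSet]
    simp only [hsec]
    rw [lintegral_indicator measurableSet_Icc, ofReal_integral_eq_lintegral_ofReal hint]
    filter_upwards [ae_restrict_mem measurableSet_Icc] with x hx
    exact mul_nonneg zero_le_two (hnn x hx)
  have hpos : 0 ≤ ∫ x in (0 : ℝ)..O.a, O.f x :=
    intervalIntegral.integral_nonneg ha.le fun x hx => O.f_nonneg hx
  have hi : ∀ c d, c ∈ Icc (-O.a) O.a → d ∈ Icc (-O.a) O.a → IntervalIntegrable O.f volume c d :=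
    fun c d hc hd => (O.f_cont.mono (uIcc_subset_Icc hc hd)).intervalIntegrable
  have hev : ∫ x in Icc (-O.a) O.a, 2 * O.f x = 4 * ∫ x in (0 : ℝ)..O.a, O.f x := by
    have h1 : ∫ x in (-O.a)..0, O.f x = ∫ x in (0 : ℝ)..O.a, O.f x := by
      have := intervalIntegral.integral_comp_neg (a := 0) (b := O.a) O.f
      simpa [O.f_even] using this.symm
    rw [integral_Icc_eq_integral_Ioc, ← intervalIntegral.integral_of_le (by linarith),
      intervalIntegral.integral_const_mul,
      ← intervalIntegral.integral_add_adjacent_intervals (b := 0)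
        (hi _ _ ⟨le_rfl, by linarith⟩ ⟨by linarith, ha.le⟩)
        (hi _ _ ⟨by linarith, ha.le⟩ ⟨by linarith, le_rfl⟩), h1]
    ring
  rw [area, hvol, hev, ENNReal.toReal_ofReal (by positivity)]

lemma area_pos : 0 < O.area := by
  rw [area_eq]
  have := intervalIntegral.intervalIntegral_pos_of_pos_on (a := 0) (b := O.a) (f := O.f) ?_ ?_
    O.a_pos
  · linarith
  · refine ContinuousOn.intervalIntegrable ?_
    rw [uIcc_of_le O.a_pos.le]
    exact O.f_cont.mono (Icc_subset_Icc_left (by linarith [O.a_pos]))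
  · intro x hx
    rw [← O.f_a]
    exact O.f_anti ⟨hx.1.le, hx.2.le⟩ ⟨O.a_pos.le, le_rfl⟩ hx.2

lemma area_mem_Icc {N : ℕ} (hN : 0 < N) :
    O.area ∈ Icc (O.riemannSum N 1) (O.riemannSum N 0) := by
  have hN' : (0 : ℝ) < N := by exact_mod_cast hN
  have hc : 0 < O.a / N := div_pos O.a_pos hN'
  have hanti : AntitoneOn (fun t => O.f (O.a / N * t)) (Icc (0 : ℝ) (0 + (N : ℕ))) := by
    have hm : ∀ t ∈ Icc (0 : ℝ) (0 + (N : ℕ)), O.a / N * t ∈ Icc 0 O.a := by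
      rintro t ⟨h0, h1⟩
      rw [zero_add] at h1
      refine ⟨by positivity, ?_⟩
      calc O.a / N * t ≤ O.a / N * N := by gcongr
        _ = O.a := by field_simp
    intro s hs t ht hst
    exact O.f_anti.antitoneOn (hm s hs) (hm t ht) (by gcongr)
  have hsub : ∫ t in (0 : ℝ)..0 + (N : ℕ), O.f (O.a / N * t) =
      (O.a / N)⁻¹ * ∫ x in (0 : ℝ)..O.a, O.f x := by
    rw [intervalIntegral.integral_comp_mul_left _ hc.ne', smul_eq_mul, zero_add, mul_zero,
      div_mul_cancel₀ _ hN'.ne']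
  have h1 := hanti.sum_le_integral
  have h2 := hanti.integral_le_sum
  rw [hsub] at h1 h2
  simp only [zero_add] at h1 h2
  rw [le_inv_mul_iff₀ hc] at h1
  rw [inv_mul_le_iff₀ hc] at h2
  rw [area_eq]
  unfold riemannSum grid
  rw [← Finset.mul_sum, ← Finset.mul_sum]
  exact ⟨by linarith, by simp only [add_zero]; linarith⟩

lemma tendsto_primeCount :
    Tendsto (fun R : ℝ => (O.primeCount R : ℝ) * (Real.log R / R) ^ 2) atTop (nhds O.area) := by
  have hsmall : ∀ ε > 0, ∃ N : ℕ, 0 < N ∧ 4 * O.a * O.b / N < ε := by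
    intro ε hε
    have := (tendsto_const_div_atTop_nhds_zero_nat (4 * O.a * O.b)).eventually_lt_const hε
    obtain ⟨N, h1, h2⟩ := (this.and (eventually_gt_atTop 0)).exists
    exact ⟨N, h2, h1⟩
  refine tendsto_order.2 ⟨fun c hc => ?_, fun c hc => ?_⟩
  · obtain ⟨N, hN, h⟩ := hsmall _ (sub_pos.2 hc)
    have h1 := O.riemannSum_sub hN
    have h2 := O.area_mem_Icc hN
    filter_upwards [(O.tendsto_primeRiemannSum hN le_rfl).eventually_const_lt
      (show c < _ by linarith [h2.2]), eventually_gt_atTop 0] with R hR hR0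
    exact hR.trans_le (mul_le_mul_of_nonneg_right (O.primeCount_mem_Icc hN hR0).1 (sq_nonneg _))
  · obtain ⟨N, hN, h⟩ := hsmall _ (sub_pos.2 hc)
    have h1 := O.riemannSum_sub hN
    have h2 := O.area_mem_Icc hN
    filter_upwards [(O.tendsto_primeRiemannSum hN zero_le_one).eventually_lt_const
      (show _ < c by linarith [h2.1]), eventually_gt_atTop 0] with R hR hR0
    exact (mul_le_mul_of_nonneg_right (O.primeCount_mem_Icc hN hR0).2 (sq_nonneg _)).trans_lt hR

end SymmetricOval

/-- Let `Ω` be a symmetric oval. Then `π_Ω(R) ∼ area(Ω)·R²/(log R)²`. -/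
theorem primeCount_asymptotic (O : SymmetricOval) :
    Filter.Tendsto
      (fun R : ℝ => (O.primeCount R : ℝ) * Real.log R ^ 2 / (O.area * R ^ 2))
      Filter.atTop (nhds 1) := by
  have h := O.tendsto_primeCount.div_const O.area
  rw [div_self O.area_pos.ne'] at h
  refine h.congr fun R => ?_
  rw [div_pow, mul_div_assoc', div_div, mul_comm O.area]

end
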